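/- For every φ∈X_{fK} there is an open neighbourhood N_φ of φ in X_f such that R^K defines a diffeomorphism from N_φ onto the set R^K N_φ, which is an open neighbourhood of R^Kφ in X_0. -/

import Mathlib

open Set

noncomputable section

/-- The compact interval `[-r,0]`. -/
abbrev Icc0 (r : ℝ) : Set ℝ := Set.Icc (-r) 0

/-- Extension of a continuous map on `[-r,0]` to `ℝ`, by the value `0` outside. -/
def extFun {r : ℝ} {E : Type*} [TopologicalSpace E] [Zero E] (φ : C(Icc0 r, E)) : ℝ → E :=
  fun t => if h : t ∈ Icc0 r then φ ⟨t, h⟩ else 0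

section extlemmas

variable {r : ℝ} {E : Type*} [NormedAddCommGroup E] [NormedSpace ℝ E]

lemma extFun_add (φ ψ : C(Icc0 r, E)) : extFun (φ + ψ) = extFun φ + extFun ψ := by
  funext t; by_cases h : t ∈ Icc0 r <;> simp [extFun, h]

lemma extFun_zero : extFun (0 : C(Icc0 r, E)) = 0 := by
  funext t; by_cases h : t ∈ Icc0 r <;> simp [extFun, h]

lemma extFun_smul (c : ℝ) (φ : C(Icc0 r, E)) : extFun (c • φ) = c • extFun φ := by
  funext t; by_cases h : t ∈ Icc0 r <;> simp [extFun, h]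

end extlemmas

/-- The space `C¹([-r,0],E)`, realized as the closed subspace of pairs `(φ, φ')` in
`C([-r,0],E) × C([-r,0],E)` such that `φ` is differentiable on `[-r,0]` with derivative `φ'`. -/
def C1sub (r : ℝ) (E : Type*) [NormedAddCommGroup E] [NormedSpace ℝ E] :
    Submodule ℝ (C(Icc0 r, E) × C(Icc0 r, E)) where
  carrier := {p | ∀ t ∈ Icc0 r, HasDerivWithinAt (extFun p.1) (extFun p.2 t) (Icc0 r) t}
  add_mem' := by
    intro p q hp hq t ht
    have h := (hp t ht).add (hq t ht)
    have e1 : extFun (p + q).1 = fun s => extFun p.1 s + extFun q.1 s := by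
      simp [Prod.fst_add, extFun_add]; rfl
    have e2 : extFun (p + q).2 t = extFun p.2 t + extFun q.2 t := by
      simp [Prod.snd_add, extFun_add]
    rw [e1, e2]; exact h
  zero_mem' := by
    intro t ht
    have e1 : extFun (0 : C(Icc0 r, E) × C(Icc0 r, E)).1 = fun _ : ℝ => (0 : E) := by
      simp [extFun_zero]; rfl
    have e2 : extFun (0 : C(Icc0 r, E) × C(Icc0 r, E)).2 t = 0 := by
      simp [extFun_zero]
    rw [e1, e2]; exact hasDerivWithinAt_const _ _ _
  smul_mem' := by
    intro c p hp t ht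
    have h := (hp t ht).const_smul c
    have e1 : extFun (c • p).1 = fun s => c • extFun p.1 s := by
      simp [Prod.smul_fst, extFun_smul]; rfl
    have e2 : extFun (c • p).2 t = c • extFun p.2 t := by
      simp [Prod.smul_snd, extFun_smul]
    rw [e1, e2]; exact h

/-- The Banach space `C¹([-r,0],E)`. -/
abbrev C1 (r : ℝ) (E : Type*) [NormedAddCommGroup E] [NormedSpace ℝ E] := ↥(C1sub r E)

section C1ops

variable {r : ℝ} {E : Type*} [NormedAddCommGroup E] [NormedSpace ℝ E]

/-- Evaluation `φ(t)` of `φ ∈ C¹([-r,0],E)` (extended by `0` outside `[-r,0]`). -/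
def evC (φ : C1 r E) (t : ℝ) : E := extFun φ.1.1 t

/-- Evaluation `φ'(t)` of the derivative of `φ ∈ C¹([-r,0],E)`. -/
def dvC (φ : C1 r E) (t : ℝ) : E := extFun φ.1.2 t

end C1ops

/-- The continuous linear map `ℝ → (Fin n → ℝ)` sending `x` to the vector `x·e_ν`. -/
def sCLM (n : ℕ) (ν : Fin n) : ℝ →L[ℝ] (Fin n → ℝ) :=
  ContinuousLinearMap.pi (fun j => if j = ν then ContinuousLinearMap.id ℝ ℝ else 0)

/-- `ψ · e_ν` for a continuous map `ψ`. -/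
def CMsingle {r : ℝ} {n : ℕ} (ν : Fin n) (φ : C(Icc0 r, ℝ)) : C(Icc0 r, Fin n → ℝ) :=
  ⟨fun t => sCLM n ν (φ t), (sCLM n ν).continuous.comp φ.continuous⟩

lemma extFun_CMsingle {r : ℝ} {n : ℕ} (ν : Fin n) (φ : C(Icc0 r, ℝ)) (t : ℝ) :
    extFun (CMsingle ν φ) t = sCLM n ν (extFun φ t) := by
  by_cases h : t ∈ Icc0 r <;> simp [extFun, CMsingle, h]

/-- `ψ · e_ν ∈ C¹([-r,0],ℝⁿ)` for a scalar function `ψ ∈ C¹([-r,0],ℝ)`. -/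
def singleC1 {r : ℝ} {n : ℕ} (ν : Fin n) (φ : C1 r ℝ) : C1 r (Fin n → ℝ) :=
  ⟨(CMsingle ν φ.1.1, CMsingle ν φ.1.2), by
    intro t ht
    have h := ((sCLM n ν).hasFDerivAt).comp_hasDerivWithinAt t (φ.2 t ht)
    have e1 : extFun (CMsingle ν φ.1.1) = (sCLM n ν) ∘ (extFun φ.1.1) := by
      funext s; exact extFun_CMsingle ν φ.1.1 s
    rw [show (CMsingle ν φ.1.1, CMsingle ν φ.1.2).1 = CMsingle ν φ.1.1 from rfl,
      show (CMsingle ν φ.1.1, CMsingle ν φ.1.2).2 = CMsingle ν φ.1.2 from rfl,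
      e1, extFun_CMsingle]
    exact h⟩

/-- The linear map `ℝⁿ → C¹([-r,0],ℝⁿ)`, `x ↦ Σ_ν x_ν ψ_ν · e_ν` (the map `Y·x`). -/
def Ymap {r : ℝ} {n : ℕ} (ψ : Fin n → C1 r ℝ) : (Fin n → ℝ) →ₗ[ℝ] C1 r (Fin n → ℝ) where
  toFun x := ∑ ν, x ν • singleC1 ν (ψ ν)
  map_add' x y := by simp [add_smul, Finset.sum_add_distrib]
  map_smul' c x := by simp [smul_smul, Finset.smul_sum]

/-- The closed subspace `X₀ = {φ ∈ C¹ : φ'(0) = 0}`. -/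
def X0sub (r : ℝ) (n : ℕ) : Submodule ℝ (C1 r (Fin n → ℝ)) where
  carrier := {φ | dvC φ 0 = 0}
  add_mem' := by
    intro φ ψ hφ hψ
    have : dvC (φ + ψ) 0 = dvC φ 0 + dvC ψ 0 := by
      simp [dvC, extFun_add]
    rw [Set.mem_setOf_eq] at *
    rw [this, hφ, hψ, add_zero]
  zero_mem' := by
    show dvC (0 : C1 r (Fin n → ℝ)) 0 = 0
    simp [dvC, extFun_zero]
  smul_mem' := by
    intro c φ hφ
    have : dvC (c • φ) 0 = c • dvC φ 0 := by simp [dvC, extFun_smul]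
    rw [Set.mem_setOf_eq] at *
    rw [this, hφ, smul_zero]

/-- The projection-like map `R φ = φ − Y·φ'(0)`. -/
def RKmap {r : ℝ} {n : ℕ} (ψ : Fin n → C1 r ℝ) (φ : C1 r (Fin n → ℝ)) : C1 r (Fin n → ℝ) :=
  φ - Ymap ψ (dvC φ 0)

section diffeos

variable {E : Type*} [NormedAddCommGroup E] [NormedSpace ℝ E]
variable {E' : Type*} [NormedAddCommGroup E'] [NormedSpace ℝ E']

/-- `f` defines a `C¹`-diffeomorphism from `s` onto `t`: `f` is continuously differentiable
on `s`, injective on `s`, maps `s` onto `t`, and has a continuously differentiable inverse. -/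
def IsC1DiffeoOn (f : E → E') (s : Set E) (t : Set E') : Prop :=
  ContDiffOn ℝ 1 f s ∧ Set.InjOn f s ∧ f '' s = t ∧
    ∃ g : E' → E, ContDiffOn ℝ 1 g t ∧ Set.InvOn g f s t

/-- The tangent cone of `X ⊆ E` at `x`: all velocities `c'(0)` of continuously differentiable
curves in `X` through `x`. -/
def tangentSet (X : Set E) (x : E) : Set E :=
  {v | ∃ (c : ℝ → E) (ε : ℝ), 0 < ε ∧ ContDiffOn ℝ 1 c (Set.Ioo (-ε) ε) ∧
      (∀ s ∈ Set.Ioo (-ε) ε, c s ∈ X) ∧ c 0 = x ∧ HasDerivWithinAt c v (Set.Ioo (-ε) ε) 0}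

/-- `X` is a continuously differentiable submanifold of codimension `m` of `E`. -/
def IsC1SubmanifoldCodim (X : Set E) (m : ℕ) : Prop :=
  ∀ x ∈ X, ∃ (O : Set E) (Φ : E → E) (H Q : Submodule ℝ E),
    IsOpen O ∧ x ∈ O ∧ IsClosed (H : Set E) ∧ IsCompl H Q ∧ Module.finrank ℝ Q = m ∧
    IsOpen (Φ '' O) ∧ IsC1DiffeoOn Φ O (Φ '' O) ∧ Φ '' (X ∩ O) = (H : Set E) ∩ (Φ '' O)

/-- `X` is a continuously differentiable submanifold of `E`. -/
def IsC1Submanifold (X : Set E) : Prop :=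
  ∀ x ∈ X, ∃ (O : Set E) (Φ : E → E) (H : Submodule ℝ E),
    IsOpen O ∧ x ∈ O ∧ IsClosed (H : Set E) ∧
    IsOpen (Φ '' O) ∧ IsC1DiffeoOn Φ O (Φ '' O) ∧ Φ '' (X ∩ O) = (H : Set E) ∩ (Φ '' O)

/-- `A` is an almost graph over `H`. -/
def IsAlmostGraphOver (A : Set E) (H : Set E) : Prop :=
  ∃ (dm : Set E) (α : E → E), dm ⊆ H ∧ ContDiffOn ℝ 1 α dm ∧
    (∀ ζ ∈ dm ∩ A, α ζ = 0) ∧ (∀ ζ ∈ dm \ A, α ζ ∉ H) ∧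
    IsC1DiffeoOn (fun ζ => ζ + α ζ) dm A

end diffeos

/-- The data of the delay differential system
`x'(t) = g(x(t-d_1(Lx_t)),…,x(t-d_kk(Lx_t)))`. -/
structure Setting (r : ℝ) (n kk : ℕ) (F : Type*) [NormedAddCommGroup F] [NormedSpace ℝ F] where
  /-- The continuous linear map `L : C([-r,0],ℝⁿ) → F`. -/
  L : C(Icc0 r, Fin n → ℝ) →L[ℝ] F
  /-- The open set `W ⊆ F`. -/
  W : Set F
  Wopen : IsOpen W
  /-- The delay functions `d_k : W → [0,r]`. -/
  d : Fin kk → F → ℝ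
  d_smooth : ∀ k, ContDiffOn ℝ 1 (d k) W
  d_mem : ∀ k, ∀ w ∈ W, d k w ∈ Set.Icc (0:ℝ) r
  /-- The open set `V ⊆ (ℝⁿ)^kk`. -/
  V : Set (Fin kk → Fin n → ℝ)
  Vopen : IsOpen V
  /-- The right hand side function `g : V → ℝⁿ`. -/
  g : (Fin kk → Fin n → ℝ) → Fin n → ℝ
  g_smooth : ContDiffOn ℝ 1 g V

namespace Setting

variable {r : ℝ} {n kk : ℕ} {F : Type*} [NormedAddCommGroup F] [NormedSpace ℝ F]
variable (S : Setting r n kk F)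

/-- `L` applied to (the `C⁰`-part of) `φ ∈ C¹`. -/
def Lof (φ : C1 r (Fin n → ℝ)) : F := S.L φ.1.1

/-- `φ̂ = (φ(-d_1(Lφ)),…,φ(-d_kk(Lφ)))`. -/
def hat (φ : C1 r (Fin n → ℝ)) : Fin kk → Fin n → ℝ := fun k => evC φ (-(S.d k (S.Lof φ)))

/-- The domain `U = {φ ∈ C¹ : Lφ ∈ W, φ̂ ∈ V}`. -/
def U : Set (C1 r (Fin n → ℝ)) := {φ | S.Lof φ ∈ S.W ∧ S.hat φ ∈ S.V}

/-- The right hand side `f(φ) = g(φ̂)`. -/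
def fmap (φ : C1 r (Fin n → ℝ)) : Fin n → ℝ := S.g (S.hat φ)

/-- The solution manifold `X_f = {φ ∈ U : φ'(0) = f(φ)}`. -/
def Xf : Set (C1 r (Fin n → ℝ)) := {φ | φ ∈ S.U ∧ dvC φ 0 = S.fmap φ}

/-- `W_J = {w ∈ W : d_j(w)=0 for j∈J, d_k(w)>0 for k∉J}`. -/
def WJ (J : Finset (Fin kk)) : Set F :=
  {w | w ∈ S.W ∧ (∀ j ∈ J, S.d j w = 0) ∧ ∀ k ∉ J, 0 < S.d k w}

/-- `W^J = {w ∈ W : d_k(w)>0 for k∉J}`. -/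
def WupJ (J : Finset (Fin kk)) : Set F :=
  {w | w ∈ S.W ∧ ∀ k ∉ J, 0 < S.d k w}

/-- `U_J = U ∩ L⁻¹(W_J)`. -/
def UJ (J : Finset (Fin kk)) : Set (C1 r (Fin n → ℝ)) := {φ | φ ∈ S.U ∧ S.Lof φ ∈ S.WJ J}

/-- `U^J = U ∩ L⁻¹(W^J)`. -/
def UupJ (J : Finset (Fin kk)) : Set (C1 r (Fin n → ℝ)) := {φ | φ ∈ S.U ∧ S.Lof φ ∈ S.WupJ J}

/-- `X_{fJ} = X_f ∩ U_J`. -/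
def XfJ (J : Finset (Fin kk)) : Set (C1 r (Fin n → ℝ)) := S.Xf ∩ S.UJ J

/-- Hypothesis (b): `g` is bounded. -/
def HypB : Prop := ∃ M, ∀ v ∈ S.V, ‖S.g v‖ ≤ M

/-- Hypothesis (d1b): `d₁ = 0` on `W` and `g` is bounded on subsets of `V` with bounded
first component. -/
def HypD1B (hk : 0 < kk) : Prop :=
  (∀ w ∈ S.W, S.d ⟨0, hk⟩ w = 0) ∧
  ∀ B : Set (Fin n → ℝ), Bornology.IsBounded B →
    Bornology.IsBounded (S.g '' {v | v ∈ S.V ∧ v ⟨0, hk⟩ ∈ B})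

/-- The partial derivative `∂_{(k-1)n+ν} g_μ (φ̂)`. -/
def dgCoeff (φ : C1 r (Fin n → ℝ)) (k : Fin kk) (ν : Fin n) (μ : Fin n) : ℝ :=
  fderivWithin ℝ S.g S.V (S.hat φ) (Pi.single k (Pi.single ν 1)) μ

/-- The right hand side of the formula for `Df_μ(φ)χ`. -/
def dFormula (φ χ : C1 r (Fin n → ℝ)) (μ : Fin n) : ℝ :=
  ∑ k, ∑ ν, S.dgCoeff φ k ν μ *
    (evC χ (-(S.d k (S.Lof φ))) ν -
      dvC φ (-(S.d k (S.Lof φ))) ν * fderivWithin ℝ (S.d k) S.W (S.Lof φ) (S.Lof χ))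

/-- The map `R^J(φ) = φ − Y_J(Lφ)·φ'(0)` of Section 4 of the paper. -/
def RJmap (y : Fin n → F → C1 r ℝ) (φ : C1 r (Fin n → ℝ)) : C1 r (Fin n → ℝ) :=
  φ - Ymap (fun ν => y ν (S.Lof φ)) (dvC φ 0)

end Setting


variable {r : ℝ} {n kk : ℕ} {F : Type*} [NormedAddCommGroup F] [NormedSpace ℝ F]
  [FiniteDimensional ℝ F]

/-!
On `X_f` the map `R^K = id - Y_K ∘ δ`, with `δ φ = φ'(0)`, coincides with `Φ = id - Y_K ∘ f`. Since
`δ ∘ Y_K = id`, one has `δ (Φ φ) = φ'(0) - f(φ)`, so near `φ` the set `X_f` is the preimage of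
`X₀ = ker δ` under `Φ`. At a point of `X_{fK}` all delays vanish, hence `f` is constant in the
directions `Y_K x`, which change neither `Lφ` nor `φ(0)`; thus `Df(φ) ∘ Y_K = 0` and
`DΦ(φ) = id - Y_K ∘ Df(φ)` is invertible with inverse `id + Y_K ∘ Df(φ)`. The inverse function
theorem applies to `Φ`.
-/

open scoped Topology

section Calculus

variable {E E' G : Type*} [NormedAddCommGroup E] [NormedSpace ℝ E]
  [NormedAddCommGroup E'] [NormedSpace ℝ E'] [NormedAddCommGroup G] [NormedSpace ℝ G]

lemma IsC1DiffeoOn.restrict {f : E → E'} {s s' : Set E} {t : Set E'} (h : IsC1DiffeoOn f s t)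
    (hs : s' ⊆ s) : IsC1DiffeoOn f s' (f '' s') := by
  obtain ⟨hf, hinj, rfl, g, hg, hleft, -⟩ := h
  have hleft' : LeftInvOn g f s' := hleft.mono hs
  exact ⟨hf.mono hs, hinj.mono hs, rfl, g, hg.mono (image_mono hs), hleft',
    hleft'.rightInvOn_image⟩

lemma IsC1DiffeoOn.congr {f f₁ : E → E'} {s : Set E} {t : Set E'} (h : IsC1DiffeoOn f s t)
    (hf₁ : EqOn f f₁ s) : IsC1DiffeoOn f₁ s t := by
  obtain ⟨hf, hinj, rfl, g, hg, hleft, -⟩ := h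
  refine ⟨hf.congr hf₁.symm, hinj.congr hf₁, hf₁.image_eq.symm, g, hg,
    fun x hx => (congrArg g (hf₁ hx)).symm.trans (hleft hx), ?_⟩
  rintro _ ⟨x, hx, rfl⟩
  rw [hleft hx, hf₁ hx]

lemma exists_isC1DiffeoOn_of_hasFDerivAt_equiv [CompleteSpace E] {f : E → E'}
    {f' : E ≃L[ℝ] E'} {x : E} {U : Set E} (hf : ContDiffAt ℝ 1 f x)
    (hf' : HasFDerivAt f (f' : E →L[ℝ] E') x) (hU : U ∈ 𝓝 x) :
    ∃ O ⊆ U, IsOpen O ∧ x ∈ O ∧ IsOpen (f '' O) ∧ IsC1DiffeoOn f O (f '' O) := by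
  let P := hf.toOpenPartialHomeomorph f hf' one_ne_zero
  have hxP : x ∈ P.source := hf.mem_toOpenPartialHomeomorph_source hf' one_ne_zero
  have hsymm : ∀ᶠ y in 𝓝 x, ContDiffAt ℝ 1 P.symm (f y) :=
    hf.continuousAt.eventually ((hf.to_localInverse hf' one_ne_zero).eventually (by simp))
  obtain ⟨O, hO, hOopen, hxO⟩ := eventually_nhds_iff.1
    (((hf.eventually (by simp)).and hsymm).and
      (Filter.inter_mem hU (P.open_source.mem_nhds hxP)))
  have hOP : O ⊆ P.source := fun y hy => (hO y hy).2.2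
  have hleft : LeftInvOn P.symm f O := fun y hy => P.left_inv (hOP hy)
  refine ⟨O, fun y hy => (hO y hy).2.1, hOopen, hxO, P.isOpen_image_of_subset_source hOopen hOP,
    fun y hy => (hO y hy).1.1.contDiffWithinAt, hleft.injOn, rfl, P.symm, ?_, hleft,
    hleft.rightInvOn_image⟩
  rintro _ ⟨y, hy, rfl⟩
  exact (hO y hy).1.2.contDiffWithinAt

/-- The operator `id - A`, as an isomorphism with inverse `id + A`, for `A` of square zero. -/
def idSubEquivOfSqZero (A : E →L[ℝ] E) (hA : A ∘L A = 0) : E ≃L[ℝ] E :=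
  ContinuousLinearEquiv.equivOfInverse (.id ℝ E - A) (.id ℝ E + A)
    (fun x => by simp [show A (A x) = 0 from DFunLike.congr_fun hA x])
    (fun x => by simp [show A (A x) = 0 from DFunLike.congr_fun hA x])

lemma exists_isC1DiffeoOn_sub_rightInverse [CompleteSpace E] {f : E → G} {f' : E →L[ℝ] G}
    {Y : G →L[ℝ] E} {δ : E →ₗ[ℝ] G} {U : Set E} {x : E} (hU : U ∈ 𝓝 x)
    (hf : ContDiffAt ℝ 1 f x) (hf' : HasFDerivAt f f' x) (hf'Y : f' ∘L Y = 0)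
    (hδY : Function.LeftInverse δ Y) :
    ∃ O, IsOpen O ∧ x ∈ O ∧
      (∃ O', IsOpen O' ∧
        (fun y => y - Y (δ y)) '' ({y ∈ U | δ y = f y} ∩ O) = (LinearMap.ker δ : Set E) ∩ O') ∧
      IsC1DiffeoOn (fun y => y - Y (δ y)) ({y ∈ U | δ y = f y} ∩ O)
        ((fun y => y - Y (δ y)) '' ({y ∈ U | δ y = f y} ∩ O)) := by
  set R : E → E := fun y => y - Y (δ y)
  set X : Set E := {y ∈ U | δ y = f y}
  let Φ : E → E := fun y => y - Y (f y)
  have hΦ : ContDiffAt ℝ 1 Φ x := contDiffAt_id.sub (Y.contDiff.contDiffAt.comp x hf)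
  have hYf' : (Y ∘L f') ∘L (Y ∘L f') = 0 := by
    rw [ContinuousLinearMap.comp_assoc, ← f'.comp_assoc, hf'Y]; simp
  have hΦ' : HasFDerivAt Φ (idSubEquivOfSqZero (Y ∘L f') hYf' : E →L[ℝ] E) x :=
    (hasFDerivAt_id x).sub (Y.hasFDerivAt.comp x hf')
  obtain ⟨O, hOU, hO, hxO, hΦO, hdiffeo⟩ :=
    exists_isC1DiffeoOn_of_hasFDerivAt_equiv hΦ hΦ' hU
  have hΦR : EqOn Φ R (X ∩ O) := fun y hy => congrArg (fun v => y - Y v) hy.1.2.symm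
  have hX_eq : X ∩ O = O ∩ Φ ⁻¹' (LinearMap.ker δ : Set E) := by
    ext y
    have hker : Φ y ∈ LinearMap.ker δ ↔ δ y = f y := by
      simp only [Φ, LinearMap.mem_ker, map_sub, hδY (f y), sub_eq_zero]
    exact ⟨fun hy => ⟨hy.2, hker.2 hy.1.2⟩, fun hy => ⟨⟨hOU hy.1, hker.1 hy.2⟩, hy.1⟩⟩
  have himage : R '' (X ∩ O) = (LinearMap.ker δ : Set E) ∩ Φ '' O := by
    rw [← hΦR.image_eq, hX_eq, image_inter_preimage, inter_comm]
  refine ⟨O, hO, hxO, ⟨Φ '' O, hΦO, himage⟩, ?_⟩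
  rw [← hΦR.image_eq]
  exact (hdiffeo.restrict inter_subset_right).congr hΦR

end Calculus

section Evaluation

set_option maxSynthPendingDepth 6

variable {E : Type*} [NormedAddCommGroup E] [NormedSpace ℝ E]

omit [NormedSpace ℝ E] in
lemma extFun_of_mem (φ : C(Icc0 r, E)) {t : ℝ} (ht : t ∈ Icc0 r) : extFun φ t = φ ⟨t, ht⟩ :=
  dif_pos ht

omit [NormedSpace ℝ E] in
lemma norm_extFun_le (φ : C(Icc0 r, E)) (t : ℝ) : ‖extFun φ t‖ ≤ ‖φ‖ := by
  by_cases ht : t ∈ Icc0 r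
  · simpa only [extFun_of_mem φ ht] using φ.norm_coe_le_norm ⟨t, ht⟩
  · simp [extFun, ht]

/-- Evaluation `φ ↦ φ(t)` on `C([-r,0],E)`; it is zero for `t` outside `[-r,0]`. -/
def extFunCLM (r : ℝ) (E : Type*) [NormedAddCommGroup E] [NormedSpace ℝ E] (t : ℝ) :
    C(Icc0 r, E) →L[ℝ] E :=
  LinearMap.mkContinuous
    { toFun := fun φ => extFun φ t
      map_add' := fun φ ψ => congrFun (extFun_add φ ψ) t
      map_smul' := fun c φ => congrFun (extFun_smul c φ) t }
    1 fun φ => by simpa using norm_extFun_le φ t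

/-- Evaluation `φ ↦ φ(t)` on `C¹([-r,0],E)`. -/
def evCLM (r : ℝ) (E : Type*) [NormedAddCommGroup E] [NormedSpace ℝ E] (t : ℝ) :
    C1 r E →L[ℝ] E :=
  extFunCLM r E t ∘L .fst ℝ _ _ ∘L (C1sub r E).subtypeL

/-- Evaluation of the derivative, `φ ↦ φ'(t)`, on `C¹([-r,0],E)`. -/
def dvCLM (r : ℝ) (E : Type*) [NormedAddCommGroup E] [NormedSpace ℝ E] (t : ℝ) :
    C1 r E →L[ℝ] E :=
  extFunCLM r E t ∘L .snd ℝ _ _ ∘L (C1sub r E).subtypeL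

lemma evCLM_apply (t : ℝ) (φ : C1 r E) : evCLM r E t φ = evC φ t := rfl

lemma dvCLM_apply (t : ℝ) (φ : C1 r E) : dvCLM r E t φ = dvC φ t := rfl

lemma hasDerivWithinAt_evC (φ : C1 r E) {t : ℝ} (ht : t ∈ Icc0 r) :
    HasDerivWithinAt (evC φ) (dvC φ t) (Icc0 r) t :=
  φ.2 t ht

lemma norm_evC_sub_evC_le (φ : C1 r E) {s t : ℝ} (hs : s ∈ Icc0 r) (ht : t ∈ Icc0 r) :
    ‖evC φ s - evC φ t‖ ≤ ‖φ‖ * ‖s - t‖ :=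
  (convex_Icc _ _).norm_image_sub_le_of_norm_hasDerivWithin_le
    (fun _ hu => hasDerivWithinAt_evC φ hu)
    (fun u _ => (norm_extFun_le φ.1.2 u).trans (norm_snd_le φ.1)) ht hs

lemma norm_extFun_sub_extFun_le_of_mem_closure {p : C(Icc0 r, E) × C(Icc0 r, E)}
    (hp : p ∈ (C1sub r E).topologicalClosure) {s t : ℝ} (hs : s ∈ Icc0 r) (ht : t ∈ Icc0 r) :
    ‖extFun p.1 s - extFun p.1 t‖ ≤ ‖p‖ * ‖s - t‖ := by
  have hcont (u : ℝ) : Continuous fun q : C(Icc0 r, E) × C(Icc0 r, E) => extFun q.1 u :=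
    (extFunCLM r E u).continuous.comp continuous_fst
  have hclosed : IsClosed {q : C(Icc0 r, E) × C(Icc0 r, E) |
      ‖extFun q.1 s - extFun q.1 t‖ ≤ ‖q‖ * ‖s - t‖} :=
    isClosed_le ((hcont s).sub (hcont t)).norm (continuous_norm.mul continuous_const)
  exact closure_minimal (fun q hq => norm_evC_sub_evC_le ⟨q, hq⟩ hs ht) hclosed hp

lemma isClosed_C1sub : IsClosed (C1sub r E : Set (C(Icc0 r, E) × C(Icc0 r, E))) := by
  refine isClosed_of_closure_subset fun p hp t ht => ?_
  rw [hasDerivWithinAt_iff_isLittleO, Asymptotics.isLittleO_iff]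
  intro ε hε
  obtain ⟨q, hq, hpq⟩ := Metric.mem_closure_iff.1 hp (ε / 3) (by positivity)
  have hpq' : p - q ∈ (C1sub r E).topologicalClosure :=
    sub_mem hp ((C1sub r E).le_topologicalClosure hq)
  have hq_diff := (hasDerivWithinAt_iff_isLittleO.1 (hq t ht)).def (c := ε / 3) (by positivity)
  filter_upwards [hq_diff, self_mem_nhdsWithin] with s hqs hs
  rw [dist_eq_norm] at hpq
  have hsplit : extFun p.1 s - extFun p.1 t - (s - t) • extFun p.2 t =
      (extFun (p - q).1 s - extFun (p - q).1 t) - (s - t) • extFun (p - q).2 t +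
        (extFun q.1 s - extFun q.1 t - (s - t) • extFun q.2 t) := by
    have hsub (a b : C(Icc0 r, E)) (u : ℝ) : extFun (a - b) u = extFun a u - extFun b u :=
      map_sub (extFunCLM r E u) a b
    simp only [Prod.fst_sub, Prod.snd_sub, hsub, smul_sub]
    abel
  have hvalue : ‖extFun (p - q).1 s - extFun (p - q).1 t‖ ≤ ε / 3 * ‖s - t‖ :=
    (norm_extFun_sub_extFun_le_of_mem_closure hpq' hs ht).trans (by gcongr)
  have hderiv : ‖(s - t) • extFun (p - q).2 t‖ ≤ ε / 3 * ‖s - t‖ := by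
    rw [norm_smul, mul_comm]
    gcongr
    exact ((norm_extFun_le _ t).trans (norm_snd_le (p - q))).trans hpq.le
  calc ‖extFun p.1 s - extFun p.1 t - (s - t) • extFun p.2 t‖
      ≤ ε / 3 * ‖s - t‖ + ε / 3 * ‖s - t‖ + ε / 3 * ‖s - t‖ := by
        rw [hsplit]
        exact norm_add_le_of_le (norm_sub_le_of_le hvalue hderiv) hqs
    _ = ε * ‖s - t‖ := by ring

instance completeSpace_C1 [CompleteSpace E] : CompleteSpace (C1 r E) :=
  isClosed_C1sub.completeSpace_coe

lemma hasFDerivWithinAt_uncurry_evC (φ : C1 r E) {t : ℝ} (ht : t ∈ Icc0 r) :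
    HasFDerivWithinAt (fun x : C1 r E × ℝ => evC x.1 x.2)
      ((evCLM r E t).coprod (.toSpanSingleton ℝ (dvC φ t))) (univ ×ˢ Icc0 r) (φ, t) := by
  -- `ψ(s) = ψ(t) + φ(s) - φ(t) + ((ψ - φ)(s) - (ψ - φ)(t))`, where the last term is quadratically
  -- small by the mean value inequality for `ψ - φ`.
  have hfst : HasFDerivWithinAt (fun x : C1 r E × ℝ => evC x.1 t)
      (evCLM r E t ∘L .fst ℝ _ _) (univ ×ˢ Icc0 r) (φ, t) :=
    (evCLM r E t ∘L .fst ℝ (C1 r E) ℝ).hasFDerivWithinAt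
  have hsnd : HasFDerivWithinAt (fun x : C1 r E × ℝ => evC φ x.2)
      (.toSpanSingleton ℝ (dvC φ t) ∘L .snd ℝ _ _) (univ ×ˢ Icc0 r) (φ, t) :=
    (hasDerivWithinAt_evC φ ht).hasFDerivWithinAt.comp (φ, t) hasFDerivWithinAt_snd
      fun _ hx => hx.2
  have hrem : HasFDerivWithinAt
      (fun x : C1 r E × ℝ => evC (x.1 - φ) x.2 - evC (x.1 - φ) t)
      (0 : C1 r E × ℝ →L[ℝ] E) (univ ×ˢ Icc0 r) (φ, t) := by
    refine Asymptotics.IsBigO.hasFDerivWithinAt (n := 2) (.of_bound 1 ?_) ⟨mem_univ φ, ht⟩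
      one_lt_two
    filter_upwards [self_mem_nhdsWithin] with x hx
    calc ‖evC (x.1 - φ) x.2 - evC (x.1 - φ) t‖
        ≤ ‖x.1 - φ‖ * ‖x.2 - t‖ := norm_evC_sub_evC_le _ hx.2 ht
      _ ≤ ‖x - (φ, t)‖ * ‖x - (φ, t)‖ := by
        gcongr
        exacts [norm_fst_le (x - (φ, t)), norm_snd_le (x - (φ, t))]
      _ = 1 * ‖‖x - (φ, t)‖ ^ 2‖ := by rw [one_mul, norm_pow, norm_norm, sq]
  have hsum := ((hfst.add hsnd).add hrem).sub_const (evC φ t)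
  rw [add_zero, ContinuousLinearMap.comp_fst_add_comp_snd] at hsum
  refine HasFDerivWithinAt.congr' hsum (fun x _ => ?_) ⟨mem_univ φ, ht⟩
  have hsub (u : ℝ) : evC (x.1 - φ) u = evC x.1 u - evC φ u := map_sub (evCLM r E u) x.1 φ
  simp only [Pi.add_apply, hsub]
  abel

lemma continuousOn_evCLM : ContinuousOn (evCLM r E) (Icc0 r) := by
  suffices LipschitzOnWith 1 (evCLM r E) (Icc0 r) from this.continuousOn
  refine LipschitzOnWith.of_dist_le_mul fun s hs t ht => ?_
  rw [dist_eq_norm, dist_eq_norm, NNReal.coe_one, one_mul]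
  exact ContinuousLinearMap.opNorm_le_bound _ (norm_nonneg _) fun φ => by
    simpa only [mul_comm, sub_apply, evCLM_apply] using
      norm_evC_sub_evC_le φ hs ht

lemma continuousOn_uncurry_dvC :
    ContinuousOn (fun x : C1 r E × ℝ => dvC x.1 x.2) (univ ×ˢ Icc0 r) := by
  rw [continuousOn_iff_continuous_domRestrict]
  have hcont : Continuous fun x : ↥((univ : Set (C1 r E)) ×ˢ Icc0 r) =>
      x.1.1.1.2 (⟨x.1.2, x.2.2⟩ : Icc0 r) := by fun_prop
  exact hcont.congr fun x => (extFun_of_mem _ x.2.2).symm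

lemma contDiffOn_uncurry_evC :
    ContDiffOn ℝ 1 (fun x : C1 r E × ℝ => evC x.1 x.2) (univ ×ˢ Icc0 r) := by
  have hcont : ContinuousOn
      (fun x : C1 r E × ℝ => (evCLM r E x.2).coprod (.toSpanSingleton ℝ (dvC x.1 x.2)))
      (univ ×ˢ Icc0 r) := by
    have hev := continuousOn_evCLM (E := E).comp continuousOn_snd
      fun (x : C1 r E × ℝ) (hx : x ∈ univ ×ˢ Icc0 r) => hx.2
    have hdv := (ContinuousLinearMap.toSpanSingletonCLE (𝕜 := ℝ) (E := E)).continuous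
      |>.comp_continuousOn (continuousOn_uncurry_dvC (r := r) (E := E))
    exact hev.continuousLinearMapCoprod hdv
  rw [← zero_add (1 : WithTop ℕ∞), contDiffOn_succ_iff_hasFDerivWithinAt (by simp)]
  intro x hx
  refine ⟨univ ×ˢ Icc0 r, by rw [insert_eq_of_mem hx]; exact self_mem_nhdsWithin, by simp, _,
    fun y hy => hasFDerivWithinAt_uncurry_evC y.1 hy.2, contDiffOn_zero.2 hcont⟩

end Evaluation

section Lifting

lemma sCLM_apply (ν : Fin n) (x : ℝ) : sCLM n ν x = Pi.single ν x := by
  ext j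
  by_cases h : j = ν
  · subst h; simp [sCLM]
  · simp [sCLM, h]

lemma evC_singleC1 (ν : Fin n) (φ : C1 r ℝ) (t : ℝ) :
    evC (singleC1 ν φ) t = Pi.single ν (evC φ t) :=
  (extFun_CMsingle ν φ.1.1 t).trans (sCLM_apply ν _)

lemma dvC_singleC1 (ν : Fin n) (φ : C1 r ℝ) (t : ℝ) :
    dvC (singleC1 ν φ) t = Pi.single ν (dvC φ t) :=
  (extFun_CMsingle ν φ.1.2 t).trans (sCLM_apply ν _)

lemma map_Ymap {G : Type*} [AddCommGroup G] [Module ℝ G] (A : C1 r (Fin n → ℝ) →ₗ[ℝ] G)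
    (ψ : Fin n → C1 r ℝ) (x : Fin n → ℝ) :
    A (Ymap ψ x) = ∑ ν, x ν • A (singleC1 ν (ψ ν)) := by
  change A (∑ ν, x ν • singleC1 ν (ψ ν)) = _
  simp only [map_sum, map_smul]

lemma evC_Ymap (ψ : Fin n → C1 r ℝ) (x : Fin n → ℝ) (t : ℝ) :
    evC (Ymap ψ x) t = fun ν => x ν * evC (ψ ν) t := by
  have h := map_Ymap (evCLM r (Fin n → ℝ) t).toLinearMap ψ x
  simp only [ContinuousLinearMap.coe_coe, evCLM_apply, evC_singleC1] at h
  ext ν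
  simp [h, Pi.single_apply]

lemma dvC_Ymap (ψ : Fin n → C1 r ℝ) (x : Fin n → ℝ) (t : ℝ) :
    dvC (Ymap ψ x) t = fun ν => x ν * dvC (ψ ν) t := by
  have h := map_Ymap (dvCLM r (Fin n → ℝ) t).toLinearMap ψ x
  simp only [ContinuousLinearMap.coe_coe, dvCLM_apply, dvC_singleC1] at h
  ext ν
  simp [h, Pi.single_apply]

end Lifting

namespace Setting

set_option maxSynthPendingDepth 6

omit [FiniteDimensional ℝ F]

variable (S : Setting r n kk F)

/-- The continuous linear map `φ ↦ Lφ` on `C¹([-r,0],ℝⁿ)`. -/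
def LofCLM : C1 r (Fin n → ℝ) →L[ℝ] F :=
  S.L ∘L .fst ℝ _ _ ∘L (C1sub r (Fin n → ℝ)).subtypeL

lemma LofCLM_apply (φ : C1 r (Fin n → ℝ)) : S.LofCLM φ = S.Lof φ := rfl

lemma isOpen_Lof_preimage_W : IsOpen (S.Lof ⁻¹' S.W) :=
  S.Wopen.preimage S.LofCLM.continuous

lemma contDiffOn_hat : ContDiffOn ℝ 1 S.hat (S.Lof ⁻¹' S.W) := by
  refine contDiffOn_pi.2 fun k => ?_
  have hLof : ContDiffOn ℝ 1 S.Lof (S.Lof ⁻¹' S.W) := S.LofCLM.contDiff.contDiffOn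
  have hdelay : ContDiffOn ℝ 1 (fun φ => -(S.d k (S.Lof φ))) (S.Lof ⁻¹' S.W) :=
    ((S.d_smooth k).comp hLof fun _ hφ => hφ).neg
  refine contDiffOn_uncurry_evC.comp (contDiffOn_id.prodMk hdelay) fun φ hφ => ⟨mem_univ φ, ?_⟩
  obtain ⟨h0, hr⟩ := S.d_mem k _ hφ
  exact ⟨neg_le_neg hr, neg_nonpos.2 h0⟩

lemma isOpen_U : IsOpen S.U :=
  S.contDiffOn_hat.continuousOn.isOpen_inter_preimage S.isOpen_Lof_preimage_W S.Vopen

lemma contDiffOn_fmap : ContDiffOn ℝ 1 S.fmap S.U :=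
  S.g_smooth.comp (S.contDiffOn_hat.mono fun _ hφ => hφ.1) fun _ hφ => hφ.2

lemma fmap_add_eq_of_mem_UJ_univ {φ χ : C1 r (Fin n → ℝ)} (hφ : φ ∈ S.UJ Finset.univ)
    (hχL : S.Lof χ = 0) (hχ0 : evC χ 0 = 0) : S.fmap (φ + χ) = S.fmap φ := by
  have hL : S.Lof (φ + χ) = S.Lof φ := by
    rw [← LofCLM_apply, map_add, LofCLM_apply, LofCLM_apply, hχL, add_zero]
  refine congrArg S.g (funext fun k => ?_)
  have hdelay : S.d k (S.Lof φ) = 0 := hφ.2.2.1 k (Finset.mem_univ k)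
  have hev : evC (φ + χ) 0 = evC φ 0 := by
    rw [← evCLM_apply, map_add, evCLM_apply, evCLM_apply, hχ0, add_zero]
  simp only [hat, hL, hdelay, neg_zero, hev]

lemma fderiv_fmap_apply_eq_zero {φ χ : C1 r (Fin n → ℝ)} (hφ : φ ∈ S.UJ Finset.univ)
    (hχL : S.Lof χ = 0) (hχ0 : evC χ 0 = 0) : fderiv ℝ S.fmap φ χ = 0 := by
  have hdiff : DifferentiableAt ℝ S.fmap φ :=
    (S.contDiffOn_fmap.contDiffAt (S.isOpen_U.mem_nhds hφ.1)).differentiableAt one_ne_zero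
  have hconst (s : ℝ) : S.fmap (φ + s • χ) = S.fmap φ := by
    refine S.fmap_add_eq_of_mem_UJ_univ hφ ?_ ?_
    · rw [← LofCLM_apply, map_smul, LofCLM_apply, hχL, smul_zero]
    · rw [← evCLM_apply, map_smul, evCLM_apply, hχ0, smul_zero]
  refine hdiff.lineDeriv_eq_fderiv.symm.trans ?_
  unfold lineDeriv
  simp only [hconst, deriv_const]

end Setting

omit [FiniteDimensional ℝ F] in
theorem statement5_general (S : Setting r n kk F) (ψ : Fin n → C1 r ℝ)
    (hψL : ∀ ν, S.L (singleC1 ν (ψ ν)).1.1 = 0) (hψ0 : ∀ ν, evC (ψ ν) 0 = 0)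
    (hψ1 : ∀ ν, dvC (ψ ν) 0 = 1) :
    ∀ φ ∈ S.XfJ (Finset.univ : Finset (Fin kk)),
      ∃ N O : Set (C1 r (Fin n → ℝ)), IsOpen O ∧ N = S.Xf ∩ O ∧ φ ∈ N ∧
        (∃ O', IsOpen O' ∧ RKmap ψ '' N = (X0sub r n : Set (C1 r (Fin n → ℝ))) ∩ O') ∧
        IsC1DiffeoOn (RKmap ψ) N (RKmap ψ '' N) := by
  rintro φ ⟨hφX, hφU⟩
  have hU : S.U ∈ 𝓝 φ := S.isOpen_U.mem_nhds hφX.1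
  have hf : ContDiffAt ℝ 1 S.fmap φ := S.contDiffOn_fmap.contDiffAt hU
  let Y : (Fin n → ℝ) →L[ℝ] C1 r (Fin n → ℝ) := (Ymap ψ).toContinuousLinearMap
  have hDfY : fderiv ℝ S.fmap φ ∘L Y = 0 := by
    ext1 x
    refine S.fderiv_fmap_apply_eq_zero hφU ?_ ?_
    · exact (map_Ymap S.LofCLM.toLinearMap ψ x).trans
        (Finset.sum_eq_zero fun ν _ => (congrArg (x ν • ·) (hψL ν)).trans (smul_zero _))
    · exact (evC_Ymap ψ x 0).trans (by simp only [hψ0, mul_zero]; rfl)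
  have hdvY : Function.LeftInverse (dvCLM r (Fin n → ℝ) 0).toLinearMap Y := fun x =>
    (dvC_Ymap ψ x 0).trans (by simp only [hψ1, mul_one])
  obtain ⟨O, hO, hφO, himage, hdiffeo⟩ := exists_isC1DiffeoOn_sub_rightInverse hU hf
    (hf.differentiableAt one_ne_zero).hasFDerivAt hDfY hdvY
  exact ⟨S.Xf ∩ O, O, hO, rfl, ⟨hφX, hφO⟩, himage, hdiffeo⟩

/-- Corollary 3.3: every `φ ∈ X_{fK}` has an open neighbourhood `N_φ` in `X_f` on which
`R^K` restricts to a diffeomorphism onto an open neighbourhood of `R^Kφ` in `X₀`. -/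
theorem statement5 (hr : 0 < r) (S : Setting r n kk F)
    (hUK : (S.UJ (Finset.univ : Finset (Fin kk))).Nonempty)
    (z : ℝ) (hz : z ∈ Set.Ioo (-r) 0) (ψ : Fin n → C1 r ℝ)
    (hψL : ∀ ν, S.L (singleC1 ν (ψ ν)).1.1 = 0)
    (hψ0 : ∀ ν, evC (ψ ν) 0 = 0)
    (hψ1 : ∀ ν, dvC (ψ ν) 0 = 1)
    (hψz : ∀ ν, ∀ t ∈ Set.Icc (-r) z, evC (ψ ν) t = 0) :
    ∀ φ ∈ S.XfJ (Finset.univ : Finset (Fin kk)),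
      ∃ N O : Set (C1 r (Fin n → ℝ)), IsOpen O ∧ N = S.Xf ∩ O ∧ φ ∈ N ∧
        (∃ O', IsOpen O' ∧ RKmap ψ '' N = (X0sub r n : Set (C1 r (Fin n → ℝ))) ∩ O') ∧
        IsC1DiffeoOn (RKmap ψ) N (RKmap ψ '' N) :=
  statement5_general S ψ hψL hψ0 hψ1
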